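/- arXiv:1801.09073 — 2 statements merged into one kernel-verified Lean document; each statement's English description precedes it below -/
import Mathlib

section
/- For every real number α with 0 < α < 2, every nonnegative integer n, and every real x, the fractional Laplacian of the over-scaled Hermite function of odd index satisfies (-Δ)^{α/2} \widetilde{H}_{2n+1}(x) = 2^{α+1} · ((-1)^{n} √((2n+1)!) / (2^{n+1/2} n!)) · (Γ(n + α/2 + 3/2) / Γ(n + 3/2)) · x · ₁F₁(n + α/2 + 3/2, 3/2; -x²). -/
/-!
The Rodrigues relation `(Hₘ e^{-y²})' = -Hₘ₊₁ e^{-y²}` and repeated integration by parts show that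
`H̃ₘ` has Fourier transform a constant times `(-iξ)^m e^{-ξ²/4}` (`FT_overHermite`). For odd
`m = 2n + 1`, multiplying by `|ξ|^α` keeps the transform odd, so only the sine part of the inverse
transform survives (`integral_abs_rpow_mul_pow_mul_exp`), leaving
`∫₀^∞ t^s e^{-t²/4} sin(xt) dt` with `s = α + 2n + 1`.

Expanding the sine and integrating term by term (`integral_rpow_mul_exp_mul_sin`) produces the
Gaussian moments `∫₀^∞ t^q e^{-t²/4} dt = 2^q Γ((q + 1)/2)`. The functional equation of `Γ` turns
these into Pochhammer symbols `(n + α/2 + 3/2)_k`, and `(2k + 1)! = 4^k k! (3/2)_k` supplies the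
other parameter of `₁F₁`. The exchange of sum and integral is justified by absolute convergence
of the `₁F₁` series (`summable_oneF1_terms`). The constants match through
`Γ(n + 3/2) = (2n + 1)! √π / (2^{2n+1} n!)`.
-/

open MeasureTheory Real Complex

noncomputable section

/-- Physicists' Hermite polynomials via the three-term recurrence. -/
def hermiteH : ℕ → ℝ → ℝ
  | 0, _ => 1
  | 1, x => 2 * x
  | (n + 2), x => 2 * x * hermiteH (n + 1) x - 2 * (n + 1) * hermiteH n x

/-- Over-scaled Hermite functions `H̃ₙ(x) = (2ⁿ n!)^{-1/2} e^{-x²} Hₙ(x)`. -/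
def overHermite (n : ℕ) (x : ℝ) : ℝ :=
  Real.exp (-x ^ 2) * hermiteH n x / Real.sqrt (2 ^ n * n.factorial)

/-- The confluent hypergeometric function `₁F₁(a, b; x)`. -/
def oneF1 (a b x : ℝ) : ℝ :=
  ∑' k : ℕ, ((ascPochhammer ℝ k).eval a / (ascPochhammer ℝ k).eval b) * x ^ k / k.factorial

/-- Fourier transform `𝓕[u](ξ) = (2π)^{-1/2} ∫ u(x) e^{-i x ξ} dx`. -/
def FT (u : ℝ → ℂ) (ξ : ℝ) : ℂ :=
  (Real.sqrt (2 * Real.pi))⁻¹ * ∫ x : ℝ, u x * Complex.exp (-Complex.I * x * ξ)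

/-- Inverse Fourier transform `𝓕⁻¹[v](x) = (2π)^{-1/2} ∫ v(ξ) e^{i x ξ} dξ`. -/
def IFT (v : ℝ → ℂ) (x : ℝ) : ℂ :=
  (Real.sqrt (2 * Real.pi))⁻¹ * ∫ ξ : ℝ, v ξ * Complex.exp (Complex.I * x * ξ)

/-- Fractional Laplacian `(-Δ)^{α/2} u = 𝓕⁻¹[|ξ|^α 𝓕[u](ξ)]`. -/
def fracLap (α : ℝ) (u : ℝ → ℂ) (x : ℝ) : ℂ :=
  IFT (fun ξ => (|ξ| ^ α : ℝ) * FT u ξ) x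

/-! ### Hermite polynomials times the Gaussian -/

/-- `Hₙ₊₁' = 2 (n + 1) Hₙ`, from the three-term recurrence by strong induction. -/
lemma hasDerivAt_hermiteH_succ (n : ℕ) (x : ℝ) :
    HasDerivAt (hermiteH (n + 1)) (2 * (n + 1) * hermiteH n x) x := by
  induction n using Nat.strong_induction_on generalizing x with
  | _ n ih =>
    match n with
    | 0 =>
      have : HasDerivAt (fun y : ℝ => 2 * y) (2 * 1) x := (hasDerivAt_id x).const_mul 2
      simpa [funext_iff, hermiteH] using this
    | 1 =>
      have h1 := ih 0 (by omega) x
      have := ((((hasDerivAt_id x).const_mul 2).mul h1).sub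
        (hasDerivAt_const x (2 * ((0 : ℕ) + 1 : ℝ) * 1)))
      refine (this.congr_of_eventuallyEq ?_).congr_deriv ?_
      · exact Filter.Eventually.of_forall fun y => by simp [hermiteH]
      · simp [hermiteH]; ring
    | k + 2 =>
      have h1 := ih (k + 1) (by omega) x
      have h0 := ih k (by omega) x
      have := ((((hasDerivAt_id x).const_mul 2).mul h1).sub
        (h0.const_mul (2 * (((k + 1 : ℕ) : ℝ) + 1))))
      refine (this.congr_of_eventuallyEq ?_).congr_deriv ?_
      · exact Filter.Eventually.of_forall fun y => by simp [hermiteH]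
      · simp [hermiteH]; ring

/-- The Rodrigues relation in differential form: `d/dx` sends `Hₙ e^{-x²}` to `-Hₙ₊₁ e^{-x²}`. -/
lemma hasDerivAt_hermiteH_mul_exp (n : ℕ) (x : ℝ) :
    HasDerivAt (fun y => hermiteH n y * Real.exp (-y ^ 2))
      (-(hermiteH (n + 1) x * Real.exp (-x ^ 2))) x := by
  have he : HasDerivAt (fun y : ℝ => Real.exp (-y ^ 2)) (Real.exp (-x ^ 2) * (-(2 * x))) x := by
    have := ((hasDerivAt_pow 2 x).neg).exp
    simpa using this
  cases n with
  | zero =>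
    simp only [hermiteH, one_mul]
    exact he.congr_deriv (by ring)
  | succ n =>
    refine ((hasDerivAt_hermiteH_succ n x).mul he).congr_deriv ?_
    simp only [hermiteH]
    ring

/-- The extra power of `y` makes the induction along the three-term recurrence close up. -/
lemma integrable_pow_mul_hermiteH_mul_exp (n : ℕ) : ∀ k : ℕ,
    Integrable (fun y : ℝ => y ^ k * hermiteH n y * Real.exp (-y ^ 2)) := by
  have base : ∀ k : ℕ, Integrable (fun y : ℝ => y ^ k * Real.exp (-y ^ 2)) := fun k => by
    have := integrable_rpow_mul_exp_neg_mul_sq (b := 1) one_pos (s := k)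
      (by have : (0 : ℝ) ≤ k := k.cast_nonneg; linarith)
    simpa using this
  induction n using Nat.strong_induction_on with
  | _ n ih =>
    intro k
    match n with
    | 0 => simpa [hermiteH] using base k
    | 1 =>
      refine ((base (k + 1)).const_mul 2).congr (Filter.Eventually.of_forall fun y => ?_)
      simp only [hermiteH]; ring
    | n + 2 =>
      refine (((ih (n + 1) (by omega) (k + 1)).const_mul 2).sub
        ((ih n (by omega) k).const_mul (2 * (n + 1)))).congr
        (Filter.Eventually.of_forall fun y => ?_)
      simp only [hermiteH, Pi.sub_apply]; ring

/-! ### Fourier transform of the over-scaled Hermite functions -/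

lemma integrable_hermiteH_mul_exp_mul_cexp (n : ℕ) (ξ : ℝ) :
    Integrable (fun y : ℝ => ((hermiteH n y * Real.exp (-y ^ 2) : ℝ) : ℂ) *
      cexp (-I * y * ξ)) := by
  have h : Integrable (fun y : ℝ => ((hermiteH n y * Real.exp (-y ^ 2) : ℝ) : ℂ)) := by
    simpa using (integrable_pow_mul_hermiteH_mul_exp n 0).ofReal (𝕜 := ℂ)
  refine h.mul_bdd (c := 1) (by fun_prop) (Filter.Eventually.of_forall fun y => ?_)
  simp [Complex.norm_exp]

/-- The Fourier integral of `Hₙ(y) e^{-y²}`: each step `n → n + 1` is an integration by parts. -/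
lemma integral_hermiteH_mul_exp_mul_cexp (n : ℕ) (ξ : ℝ) :
    ∫ y : ℝ, ((hermiteH n y * Real.exp (-y ^ 2) : ℝ) : ℂ) * cexp (-I * y * ξ) =
      (-I * ξ) ^ n * (Real.sqrt π * Real.exp (-ξ ^ 2 / 4) : ℝ) := by
  induction n with
  | zero =>
    have := fourierIntegral_gaussian (b := 1) (by simp) (-ξ)
    have h2 : ((π : ℂ) / 1) ^ (1 / 2 : ℂ) = (Real.sqrt π : ℂ) := by
      rw [Real.sqrt_eq_rpow, Complex.ofReal_cpow pi_pos.le]; simp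
    rw [h2] at this
    rw [pow_zero, one_mul]
    push_cast
    convert this using 3 with y
    · simp only [hermiteH]
      push_cast
      rw [mul_comm]
      congr 2
      · ring
      · simp
    · simp
  | succ n ih =>
    have hd : ∀ y : ℝ, HasDerivAt
        (fun y : ℝ => ((hermiteH n y * Real.exp (-y ^ 2) : ℝ) : ℂ) * cexp (-I * y * ξ))
        (-(((hermiteH (n + 1) y * Real.exp (-y ^ 2) : ℝ) : ℂ) * cexp (-I * y * ξ)) +
          (-I * ξ) * (((hermiteH n y * Real.exp (-y ^ 2) : ℝ) : ℂ) * cexp (-I * y * ξ))) y := by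
      intro y
      have h1 := (hasDerivAt_hermiteH_mul_exp n y).ofReal_comp
      have h2 : HasDerivAt (fun y : ℝ => cexp (-I * y * ξ))
          (cexp (-I * y * ξ) * (-I * 1 * ξ)) y :=
        ((((hasDerivAt_id y).ofReal_comp).const_mul (-I)).mul_const (ξ : ℂ)).cexp
      refine (h1.mul h2).congr_deriv ?_
      push_cast
      ring
    have i0 := (integrable_hermiteH_mul_exp_mul_cexp n ξ).const_mul (-I * ξ)
    have i1 : Integrable (fun y : ℝ =>
        -(((hermiteH (n + 1) y * Real.exp (-y ^ 2) : ℝ) : ℂ) * cexp (-I * y * ξ))) :=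
      (integrable_hermiteH_mul_exp_mul_cexp (n + 1) ξ).neg
    have := integral_eq_zero_of_hasDerivAt_of_integrable hd (i1.add i0)
      (integrable_hermiteH_mul_exp_mul_cexp n ξ)
    rw [integral_add i1 i0, integral_const_mul, ih] at this
    rw [integral_neg] at this
    rw [pow_succ]
    linear_combination -this

lemma FT_overHermite (n : ℕ) (ξ : ℝ) :
    FT (fun y => (overHermite n y : ℂ)) ξ =
      (-I * ξ) ^ n * ((Real.sqrt 2)⁻¹ * (Real.sqrt (2 ^ n * n.factorial))⁻¹ *
        Real.exp (-ξ ^ 2 / 4) : ℝ) := by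
  have h : ∀ y : ℝ, (overHermite n y : ℂ) * cexp (-I * y * ξ) =
      (((Real.sqrt (2 ^ n * n.factorial))⁻¹ : ℝ) : ℂ) *
        (((hermiteH n y * Real.exp (-y ^ 2) : ℝ) : ℂ) * cexp (-I * y * ξ)) := fun y => by
    rw [overHermite]; push_cast; ring
  have hπ : (Real.sqrt π : ℂ) ≠ 0 := by
    exact_mod_cast (Real.sqrt_pos.2 pi_pos).ne'
  simp only [FT, h]
  rw [integral_const_mul, integral_hermiteH_mul_exp_mul_cexp, Real.sqrt_mul zero_le_two]
  push_cast
  field_simp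

/-! ### Gaussian moments, Pochhammer symbols and Gamma values -/

lemma integral_rpow_mul_exp_neg_sq_div_four {s : ℝ} (hs : -1 < s) :
    ∫ t in Set.Ioi (0 : ℝ), t ^ s * Real.exp (-t ^ 2 / 4) =
      2 ^ s * Real.Gamma ((s + 1) / 2) := by
  have h := _root_.integral_rpow_mul_exp_neg_mul_rpow (p := 2) (q := s) (b := 1 / 4)
    (by norm_num) hs (by norm_num)
  have h4 : ((1 : ℝ) / 4) ^ (-(s + 1) / 2) * (1 / 2) = 2 ^ s := by
    rw [show (1 : ℝ) / 4 = 2 ^ (-2 : ℝ) by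
      rw [Real.rpow_neg (by norm_num)]; norm_num, ← Real.rpow_mul (by norm_num),
      show -2 * (-(s + 1) / 2) = s + 1 by ring, Real.rpow_add_one (by norm_num)]
    ring
  rw [h4] at h
  rw [← h]
  refine integral_congr_ae (Filter.Eventually.of_forall fun t => ?_)
  simp only [Real.rpow_two]
  congr 2
  ring

lemma integrableOn_rpow_mul_exp_neg_sq_div_four {s : ℝ} (hs : -1 < s) :
    IntegrableOn (fun t : ℝ => t ^ s * Real.exp (-t ^ 2 / 4)) (Set.Ioi 0) := by
  have h := integrableOn_rpow_mul_exp_neg_mul_sq (b := 1 / 4) (by norm_num) hs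
  refine h.congr (Filter.Eventually.of_forall fun t => ?_)
  simp only
  congr 2
  ring

lemma Gamma_add_nat_eq_ascPochhammer {a : ℝ} (ha : 0 < a) (k : ℕ) :
    Real.Gamma (a + k) = (ascPochhammer ℝ k).eval a * Real.Gamma a := by
  induction k with
  | zero => simp
  | succ k ih =>
    rw [ascPochhammer_succ_eval, Nat.cast_succ, ← add_assoc,
      Real.Gamma_add_one (by positivity), ih]
    ring

/-- This identity turns the sine coefficients `1 / (2k + 1)!` into the denominators
`(3/2)_k k!` of `₁F₁(·, 3/2; ·)`. -/
lemma factorial_two_mul_add_one_eq (k : ℕ) :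
    ((2 * k + 1).factorial : ℝ) = 4 ^ k * k.factorial * (ascPochhammer ℝ k).eval (3 / 2) := by
  induction k with
  | zero => simp
  | succ k ih =>
    rw [show 2 * (k + 1) + 1 = (2 * k + 1) + 1 + 1 by ring, Nat.factorial_succ,
      Nat.factorial_succ (2 * k + 1), Nat.factorial_succ k, ascPochhammer_succ_eval]
    push_cast
    rw [ih]
    ring

/-- The half-integer Gamma value, with the double factorial written through factorials. -/
lemma Gamma_nat_add_three_halves (n : ℕ) :
    Real.Gamma ((n : ℝ) + 3 / 2) =
      (2 * n + 1).factorial * Real.sqrt π / (2 ^ (2 * n + 1) * n.factorial) := by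
  have h := Gamma_add_nat_eq_ascPochhammer (a := 3 / 2) (by norm_num) n
  rw [add_comm, h, factorial_two_mul_add_one_eq, show (3 / 2 : ℝ) = 1 / 2 + 1 by norm_num,
    Real.Gamma_add_one (by norm_num), Real.Gamma_one_half_eq, pow_succ, pow_mul]
  norm_num
  field_simp

/-! ### The sine transform as a confluent hypergeometric series -/

/-- Consecutive terms of the series of `₁F₁(a, 3/2; z)` have ratio
`(a + k) z / ((3/2 + k) (k + 1))`, at most `(a + 1) |z| / (k + 1)` in absolute value. -/
lemma summable_oneF1_terms {a : ℝ} (ha : 0 < a) (z : ℝ) :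
    Summable (fun k : ℕ => ((ascPochhammer ℝ k).eval a / (ascPochhammer ℝ k).eval (3 / 2)) *
      z ^ k / k.factorial) := by
  refine summable_of_ratio_norm_eventually_le (r := 1 / 2) (by norm_num) ?_
  filter_upwards [Filter.eventually_ge_atTop ⌈2 * ((a + 1) * |z|)⌉₊] with k hk
  have hk' : 2 * ((a + 1) * |z|) ≤ k := Nat.ceil_le.1 hk
  have hb : 0 < (ascPochhammer ℝ k).eval (3 / 2 : ℝ) := ascPochhammer_pos k _ (by norm_num)
  have e : ((ascPochhammer ℝ (k + 1)).eval a / (ascPochhammer ℝ (k + 1)).eval (3 / 2)) *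
      z ^ (k + 1) / (k + 1).factorial = ((a + k) / (3 / 2 + k) * (z / (k + 1))) *
      (((ascPochhammer ℝ k).eval a / (ascPochhammer ℝ k).eval (3 / 2)) *
      z ^ k / k.factorial) := by
    rw [ascPochhammer_succ_eval, ascPochhammer_succ_eval, Nat.factorial_succ]
    push_cast
    field_simp
    ring
  rw [e, norm_mul]
  refine mul_le_mul_of_nonneg_right ?_ (norm_nonneg _)
  have h1 : (a + k) / (3 / 2 + k) ≤ a + 1 := by
    rw [div_le_iff₀ (by positivity)]
    nlinarith [mul_nonneg ha.le (Nat.cast_nonneg k : (0 : ℝ) ≤ k)]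
  rw [norm_mul, Real.norm_of_nonneg (by positivity), norm_div, Real.norm_eq_abs z,
    Real.norm_of_nonneg (by positivity : (0 : ℝ) ≤ k + 1)]
  calc (a + k) / (3 / 2 + k) * (|z| / (k + 1)) ≤ (a + 1) * (|z| / (k + 1)) := by gcongr
    _ = ((a + 1) * |z|) / (k + 1) := by ring
    _ ≤ 1 / 2 := by
      rw [div_le_iff₀ (by positivity)]
      linarith

/-- The half-line sine transform of `t ^ s e^{-t²/4}`, by expanding the sine and integrating
term by term; the summability justifying the exchange is that of the `₁F₁` series at `x²`. -/
lemma integral_rpow_mul_exp_mul_sin {s : ℝ} (hs : 0 < s) (x : ℝ) :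
    ∫ t in Set.Ioi (0 : ℝ), t ^ s * Real.exp (-t ^ 2 / 4) * Real.sin (x * t) =
      2 ^ (s + 1) * Real.Gamma (s / 2 + 1) * x * oneF1 (s / 2 + 1) (3 / 2) (-x ^ 2) := by
  set G : ℕ → ℝ → ℝ := fun k t => t ^ (s + (2 * k + 1 : ℕ)) * Real.exp (-t ^ 2 / 4) with hG
  set F : ℕ → ℝ → ℝ := fun k t => (-1) ^ k * x ^ (2 * k + 1) / (2 * k + 1).factorial * G k t with hF
  have hs' : ∀ k : ℕ, -1 < s + (2 * k + 1 : ℕ) := fun k => by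
    have : (0 : ℝ) ≤ (2 * k + 1 : ℕ) := Nat.cast_nonneg _
    linarith
  have hGint : ∀ k, IntegrableOn (G k) (Set.Ioi 0) := fun k =>
    integrableOn_rpow_mul_exp_neg_sq_div_four (hs' k)
  have ha : 0 < s / 2 + 1 := by positivity
  have hGval : ∀ k, ∫ t in Set.Ioi (0 : ℝ), G k t = 2 ^ (s + 1) * 4 ^ k *
      (ascPochhammer ℝ k).eval (s / 2 + 1) * Real.Gamma (s / 2 + 1) := fun k => by
    rw [hG]
    simp only
    rw [integral_rpow_mul_exp_neg_sq_div_four (hs' k),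
      show (s + (2 * k + 1 : ℕ) + 1) / 2 = s / 2 + 1 + k by push_cast; ring,
      Gamma_add_nat_eq_ascPochhammer ha,
      show s + (2 * k + 1 : ℕ) = s + 1 + (2 * k : ℕ) by push_cast; ring,
      Real.rpow_add (by norm_num), Real.rpow_natCast, pow_mul]
    norm_num
    ring
  have hpos : ∀ k, (ascPochhammer ℝ k).eval (3 / 2 : ℝ) ≠ 0 := fun k =>
    (ascPochhammer_pos k _ (by norm_num)).ne'
  have hFint : ∀ k, Integrable (F k) (volume.restrict (Set.Ioi 0)) := fun k =>
    (hGint k).const_mul _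
  have hFval : ∀ k, ∫ t in Set.Ioi (0 : ℝ), F k t =
      2 ^ (s + 1) * Real.Gamma (s / 2 + 1) * x *
      (((ascPochhammer ℝ k).eval (s / 2 + 1) / (ascPochhammer ℝ k).eval (3 / 2)) *
      (-x ^ 2) ^ k / k.factorial) := fun k => by
    have := hpos k
    rw [hF]
    simp only
    rw [integral_const_mul, hGval, factorial_two_mul_add_one_eq, neg_pow (x ^ 2), ← pow_mul]
    field_simp
    ring
  have hFnorm : ∀ k, ∫ t in Set.Ioi (0 : ℝ), ‖F k t‖ =
      2 ^ (s + 1) * Real.Gamma (s / 2 + 1) * |x| *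
      (((ascPochhammer ℝ k).eval (s / 2 + 1) / (ascPochhammer ℝ k).eval (3 / 2)) *
      (x ^ 2) ^ k / k.factorial) := fun k => by
    have := hpos k
    have h1 : ∫ t in Set.Ioi (0 : ℝ), ‖F k t‖ =
        ∫ t in Set.Ioi (0 : ℝ), |x| ^ (2 * k + 1) / (2 * k + 1).factorial * G k t := by
      refine setIntegral_congr_fun measurableSet_Ioi fun t ht => ?_
      have ht' : (0 : ℝ) < t := ht
      have hGp : 0 ≤ G k t := by simp only [hG]; positivity
      simp only [hF]
      rw [norm_mul, Real.norm_of_nonneg hGp, norm_div, norm_mul, norm_pow, norm_pow]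
      simp
    rw [h1, integral_const_mul, hGval, factorial_two_mul_add_one_eq, ← sq_abs x, ← pow_mul]
    field_simp
    ring
  have key := hasSum_integral_of_summable_integral_norm hFint (by
    simp only [hFnorm]
    exact (summable_oneF1_terms ha (x ^ 2)).mul_left _)
  simp only [hFval] at key
  have hsum : ∫ t in Set.Ioi (0 : ℝ), ∑' k, F k t =
      ∫ t in Set.Ioi (0 : ℝ), t ^ s * Real.exp (-t ^ 2 / 4) * Real.sin (x * t) := by
    refine setIntegral_congr_fun measurableSet_Ioi fun t ht => ?_
    have ht' : (0 : ℝ) < t := ht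
    refine HasSum.tsum_eq ?_
    refine ((Real.hasSum_sin (x * t)).mul_left (t ^ s * Real.exp (-t ^ 2 / 4))).congr_fun ?_
    intro k
    simp only [hF, hG]
    rw [Real.rpow_add ht', Real.rpow_natCast, mul_pow]
    ring
  rw [← hsum, ← key.tsum_eq, tsum_mul_left, oneF1]

/-! ### Parity of the inverse Fourier integrand -/

/-- The cosine part of the inverse Fourier integrand is odd and drops out, while the
sine part is even and folds onto the half line. -/
lemma integral_abs_rpow_mul_pow_mul_exp {α : ℝ} (hα : 0 < α) (n : ℕ) (x : ℝ) :
    ∫ ξ : ℝ, ((|ξ| ^ α * ξ ^ (2 * n + 1) * Real.exp (-ξ ^ 2 / 4) : ℝ) : ℂ) *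
        cexp (I * x * ξ) =
      2 * I * (∫ t in Set.Ioi (0 : ℝ), t ^ (α + (2 * n + 1 : ℕ)) * Real.exp (-t ^ 2 / 4) *
        Real.sin (x * t) : ℝ) := by
  set g : ℝ → ℝ := fun ξ => |ξ| ^ α * ξ ^ (2 * n + 1) * Real.exp (-ξ ^ 2 / 4) with hg
  have hs : -1 < α + (2 * n + 1 : ℕ) := by
    have : (0 : ℝ) ≤ (2 * n + 1 : ℕ) := Nat.cast_nonneg _
    linarith
  have hgc : Measurable g := by simp only [hg]; fun_prop
  have habs : ∀ ξ : ℝ, |g ξ| = |ξ| ^ (α + (2 * n + 1 : ℕ)) * Real.exp (-|ξ| ^ 2 / 4) := fun ξ => by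
    simp only [hg]
    rw [Real.rpow_add_natCast' (abs_nonneg _) (by positivity), abs_mul, abs_mul, abs_pow,
      Real.abs_exp, sq_abs, abs_of_nonneg (Real.rpow_nonneg (abs_nonneg _) _)]
  have hgi : Integrable g := by
    rw [← integrable_norm_iff hgc.aestronglyMeasurable]
    simp only [Real.norm_eq_abs, habs]
    -- The Bochner integral of a non-integrable function is zero, and this one is positive.
    refine Integrable.of_integral_ne_zero ?_
    rw [integral_comp_abs (f := fun t => t ^ (α + (2 * n + 1 : ℕ)) * Real.exp (-t ^ 2 / 4)),
      integral_rpow_mul_exp_neg_sq_div_four hs]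
    have : 0 < Real.Gamma ((α + (2 * n + 1 : ℕ) + 1) / 2) := Real.Gamma_pos_of_pos (by positivity)
    positivity
  have hneg : ∀ ξ, g (-ξ) = -g ξ := fun ξ => by
    simp only [hg]
    rw [abs_neg, Odd.neg_pow ⟨n, rfl⟩, neg_sq]
    ring
  have hcint : Integrable (fun ξ => g ξ * Real.cos (x * ξ)) :=
    hgi.mul_bdd (c := 1) (by fun_prop) (Filter.Eventually.of_forall fun ξ => Real.abs_cos_le_one _)
  have hsint : Integrable (fun ξ => g ξ * Real.sin (x * ξ)) :=
    hgi.mul_bdd (c := 1) (by fun_prop) (Filter.Eventually.of_forall fun ξ => Real.abs_sin_le_one _)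
  have hcos : ∫ ξ, g ξ * Real.cos (x * ξ) = 0 := by
    have h := integral_neg_eq_self (fun ξ => g ξ * Real.cos (x * ξ)) volume
    simp only [hneg, mul_neg, Real.cos_neg, neg_mul, integral_neg] at h
    linarith
  have hsin : ∫ ξ, g ξ * Real.sin (x * ξ) =
      2 * ∫ t in Set.Ioi (0 : ℝ), t ^ (α + (2 * n + 1 : ℕ)) * Real.exp (-t ^ 2 / 4) *
        Real.sin (x * t) := by
    rw [← integral_comp_abs (f := fun t => t ^ (α + (2 * n + 1 : ℕ)) * Real.exp (-t ^ 2 / 4) *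
        Real.sin (x * t))]
    refine integral_congr_ae (Filter.Eventually.of_forall fun ξ => ?_)
    simp only [← habs]
    rcases le_total 0 ξ with h | h
    · rw [abs_of_nonneg h, abs_of_nonneg (by simp only [hg]; positivity)]
    · have h2 : 0 ≤ g (-ξ) := by
        have := neg_nonneg.2 h
        simp only [hg]; positivity
      rw [hneg] at h2
      rw [abs_of_nonpos h, abs_of_nonpos (neg_nonneg.1 h2), mul_neg, Real.sin_neg]
      ring
  have hsplit : ∀ ξ : ℝ, (g ξ : ℂ) * cexp (I * x * ξ) =
      ((g ξ * Real.cos (x * ξ) : ℝ) : ℂ) + I * ((g ξ * Real.sin (x * ξ) : ℝ) : ℂ) := fun ξ => by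
    rw [show I * (x : ℂ) * ξ = (x * ξ : ℂ) * I by ring, Complex.exp_mul_I]
    push_cast
    ring
  change ∫ ξ : ℝ, (g ξ : ℂ) * cexp (I * x * ξ) = _
  simp only [hsplit]
  have hcint' : Integrable (fun ξ => ((g ξ * Real.cos (x * ξ) : ℝ) : ℂ)) := hcint.ofReal
  have hsint' : Integrable (fun ξ => ((g ξ * Real.sin (x * ξ) : ℝ) : ℂ)) := hsint.ofReal
  rw [integral_add hcint' (hsint'.const_mul I), integral_const_mul,
    integral_complex_ofReal, integral_complex_ofReal, hcos, hsin]
  push_cast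
  ring

/-! ### Assembling the constants -/

theorem fracLap_overHermite_odd (α : ℝ) (hα₀ : 0 < α) (hα₂ : α < 2) (n : ℕ) (x : ℝ) :
    fracLap α (fun y => (overHermite (2 * n + 1) y : ℂ)) x =
      ↑((2 : ℝ) ^ (α + 1) *
          ((-1 : ℝ) ^ n * Real.sqrt ((2 * n + 1).factorial) /
            ((2 : ℝ) ^ ((n : ℝ) + 1 / 2) * n.factorial)) *
          (Real.Gamma ((n : ℝ) + α / 2 + 3 / 2) / Real.Gamma ((n : ℝ) + 3 / 2)) * x *
          oneF1 ((n : ℝ) + α / 2 + 3 / 2) (3 / 2) (-x ^ 2)) := by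
  set c : ℝ := (Real.sqrt 2)⁻¹ * (Real.sqrt (2 ^ (2 * n + 1) * (2 * n + 1).factorial))⁻¹ with hc
  have hI : ((-I) ^ (2 * n + 1) : ℂ) = (-1) ^ n * (-I) := by
    rw [pow_succ, pow_mul, neg_sq, I_sq]
  have h1 : ∀ ξ : ℝ, (|ξ| ^ α : ℝ) * FT (fun y => (overHermite (2 * n + 1) y : ℂ)) ξ *
      cexp (I * x * ξ) = ((-1) ^ n * (-I) * c) *
      (((|ξ| ^ α * ξ ^ (2 * n + 1) * Real.exp (-ξ ^ 2 / 4) : ℝ) : ℂ) * cexp (I * x * ξ)) := by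
    intro ξ
    rw [FT_overHermite, ← hc, mul_pow, hI]
    push_cast
    ring
  simp only [fracLap, IFT, h1]
  rw [integral_const_mul, integral_abs_rpow_mul_pow_mul_exp hα₀,
    integral_rpow_mul_exp_mul_sin (by positivity),
    show (α + (2 * n + 1 : ℕ)) / 2 + 1 = (n : ℝ) + α / 2 + 3 / 2 by push_cast; ring]
  set A := Real.Gamma ((n : ℝ) + α / 2 + 3 / 2)
  set B := oneF1 ((n : ℝ) + α / 2 + 3 / 2) (3 / 2) (-x ^ 2)
  -- The factor `-i` from the transform meets the `i` from the sine part and makes the result real.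
  have hII : ∀ z w u : ℂ, z * ((-1) ^ n * (-I) * w * (2 * I * u)) =
      2 * (-1) ^ n * z * w * u := fun z w u => by
    linear_combination (-2 * z * (-1) ^ n * w * u) * I_mul_I
  rw [hII]
  have hreal : 2 * (-1 : ℝ) ^ n * (Real.sqrt (2 * π))⁻¹ * c *
      (2 ^ (α + (2 * n + 1 : ℕ) + 1) * A * x * B) =
      (2 : ℝ) ^ (α + 1) * ((-1 : ℝ) ^ n * Real.sqrt ((2 * n + 1).factorial) /
            ((2 : ℝ) ^ ((n : ℝ) + 1 / 2) * n.factorial)) *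
          (A / Real.Gamma ((n : ℝ) + 3 / 2)) * x * B := by
    have hp1 : (2 : ℝ) ^ (α + (2 * n + 1 : ℕ) + 1) = 2 ^ (α + 1) * 2 ^ (2 * n + 1) := by
      rw [show α + (2 * n + 1 : ℕ) + 1 = α + 1 + (2 * n + 1 : ℕ) by ring,
        Real.rpow_add (by norm_num), Real.rpow_natCast]
    have hp2 : (2 : ℝ) ^ ((n : ℝ) + 1 / 2) = 2 ^ n * Real.sqrt 2 := by
      rw [Real.rpow_add (by norm_num), Real.rpow_natCast, Real.sqrt_eq_rpow]
    have hp3 : Real.sqrt (2 ^ (2 * n + 1)) = 2 ^ n * Real.sqrt 2 := by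
      rw [pow_succ, Real.sqrt_mul (by positivity), pow_mul', Real.sqrt_sq (by positivity)]
    have hf : (0 : ℝ) < (2 * n + 1).factorial := by positivity
    have hs2 : Real.sqrt 2 ^ 2 = 2 := Real.sq_sqrt (by norm_num)
    have hsf : Real.sqrt ((2 * n + 1).factorial : ℝ) ^ 2 = (2 * n + 1).factorial :=
      Real.sq_sqrt hf.le
    have hsp : 0 < Real.sqrt ((2 * n + 1).factorial : ℝ) := Real.sqrt_pos.2 hf
    rw [hc, Gamma_nat_add_three_halves, hp1, hp2, Real.sqrt_mul zero_le_two π,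
      Real.sqrt_mul (by positivity : (0 : ℝ) ≤ 2 ^ (2 * n + 1)), hp3]
    generalize Real.sqrt ((2 * n + 1).factorial : ℝ) = q at *
    rw [← hsf]
    field_simp
    rw [hs2]
  rw [← hreal]
  push_cast
  ring
end
end

section
/- For every nonnegative integer n, the normalized Hermite function \widehat{H}_n is an eigenfunction of the Fourier transform with eigenvalue (-i)^n; that is, for all real ξ, (2π)^{-1/2} ∫_ℝ \widehat{H}_n(x) e^{-i ξ x} dx = (-i)^n \widehat{H}_n(ξ). -/
/-!
For fixed `ξ`, put `w(x) = e^{-x²/2} e^{-ixξ}` and `Jₙ = ∫ Hₙ w`. Since `w' = (-x - iξ) w`,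
integrating the derivative of `Hₙ₊₁ w` over `ℝ` and using `Hₙ₊₁' = 2(n+1)Hₙ` gives
`∫ x Hₙ₊₁ w = 2(n+1) Jₙ - iξ Jₙ₊₁`. The three-term recurrence for `Hₙ` then becomes
`Jₙ₊₂ = -2iξ Jₙ₊₁ + 2(n+1) Jₙ`, which is also the recurrence satisfied by
`√(2π) (-i)ⁿ e^{-ξ²/2} Hₙ(ξ)`. The case `n = 0` is the Fourier transform of the Gaussian, and the
case `n = 1` is the same integration by parts with `H₀' = 0`. This argument never differentiates
in `ξ` under the integral sign.
-/

open MeasureTheory Real Complex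

noncomputable section

/-- Normalized Hermite functions `Ĥₙ(x) = (2ⁿ n!)^{-1/2} e^{-x²/2} Hₙ(x)`. -/
def normHermite (n : ℕ) (x : ℝ) : ℝ :=
  Real.exp (-x ^ 2 / 2) * hermiteH n x / Real.sqrt (2 ^ n * n.factorial)

/-- The recurrence in a form valid from `n = 0` on: the truncated `n - 1` is harmless because its
coefficient vanishes at `n = 0`. -/
theorem hermiteH_succ (n : ℕ) (x : ℝ) :
    hermiteH (n + 1) x = 2 * x * hermiteH n x - 2 * n * hermiteH (n - 1) x := by
  cases n with
  | zero => simp [hermiteH]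
  | succ n => simp [hermiteH]

theorem hasDerivAt_hermiteH (n : ℕ) (x : ℝ) :
    HasDerivAt (hermiteH n) (2 * n * hermiteH (n - 1) x) x := by
  induction n using Nat.strong_induction_on with
  | _ n ih =>
    match n with
    | 0 => simpa [hermiteH] using hasDerivAt_const x (1 : ℝ)
    | 1 => simpa [hermiteH] using (hasDerivAt_id x).const_mul (2 : ℝ)
    | n + 2 =>
      have h1 := ih (n + 1) (by omega)
      have h0 := ih n (by omega)
      have h := (((hasDerivAt_id x).const_mul (2 : ℝ)).mul h1).sub
        (h0.const_mul (2 * ((n : ℝ) + 1)))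
      convert! h using 1
      have := hermiteH_succ n x
      simp only [Nat.add_sub_cancel, show n + 2 - 1 = n + 1 from rfl, id]
      push_cast
      linear_combination (2 * (n : ℝ) + 2) * this

theorem continuous_hermiteH (n : ℕ) : Continuous (hermiteH n) :=
  continuous_iff_continuousAt.2 fun x => (hasDerivAt_hermiteH n x).continuousAt

/-- The power `x ^ k` is carried along so that the induction on `n` closes under the factor `x` in
the recurrence. -/
theorem integrable_pow_mul_hermiteH (n k : ℕ) :
    Integrable fun x : ℝ => x ^ k * hermiteH n x * Real.exp (-x ^ 2 / 2) := by
  induction n using Nat.strong_induction_on generalizing k with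
  | _ n ih =>
    have base (k : ℕ) : Integrable fun x : ℝ => x ^ k * Real.exp (-x ^ 2 / 2) := by
      have h := integrable_rpow_mul_exp_neg_mul_sq (b := 1 / 2) (by norm_num) (s := k)
        (by linarith [Nat.cast_nonneg (α := ℝ) k])
      refine h.congr (Filter.Eventually.of_forall fun x => ?_)
      simp only [Real.rpow_natCast]
      ring_nf
    match n with
    | 0 => simpa [hermiteH] using base k
    | 1 =>
      refine ((base (k + 1)).const_mul 2).congr (Filter.Eventually.of_forall fun x => ?_)
      simp only [hermiteH]
      ring
    | n + 2 =>
      refine (((ih (n + 1) (by omega) (k + 1)).const_mul 2).sub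
        ((ih n (by omega) k).const_mul (2 * ((n : ℝ) + 1)))).congr
          (Filter.Eventually.of_forall fun x => ?_)
      simp only [hermiteH, Pi.sub_apply]
      ring

/-- The Gaussian times the Fourier character, `e^{-x²/2} e^{-ixξ}`. -/
def fourierWeight (ξ x : ℝ) : ℂ :=
  (Real.exp (-x ^ 2 / 2) : ℝ) * Complex.exp (-Complex.I * x * ξ)

theorem hasDerivAt_fourierWeight (ξ x : ℝ) :
    HasDerivAt (fourierWeight ξ) ((-x - Complex.I * ξ) * fourierWeight ξ x) x := by
  have h1 : HasDerivAt (fun x : ℝ => Real.exp (-x ^ 2 / 2)) (Real.exp (-x ^ 2 / 2) * (-x)) x := by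
    have h := (((hasDerivAt_pow 2 x).neg).div_const 2).exp
    convert! h using 1
    simp only [Pi.neg_apply]
    push_cast
    ring
  have h2 : HasDerivAt (fun x : ℝ => Complex.exp (-Complex.I * x * ξ))
      (Complex.exp (-Complex.I * x * ξ) * (-Complex.I * ξ)) x := by
    have h := ((((hasDerivAt_id x).ofReal_comp).const_mul (-Complex.I)).mul_const (ξ : ℂ)).cexp
    convert! h using 1
    simp
  convert! h1.ofReal_comp.mul h2 using 1
  simp only [fourierWeight]
  push_cast
  ring

theorem norm_fourierWeight (ξ x : ℝ) : ‖fourierWeight ξ x‖ = Real.exp (-x ^ 2 / 2) := by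
  simp [fourierWeight, Complex.norm_exp, -Complex.ofReal_exp]

theorem continuous_fourierWeight (ξ : ℝ) : Continuous (fourierWeight ξ) :=
  continuous_iff_continuousAt.2 fun x => (hasDerivAt_fourierWeight ξ x).continuousAt

theorem integrable_pow_mul_hermiteH_mul_fourierWeight (ξ : ℝ) (n k : ℕ) :
    Integrable fun x : ℝ => (x : ℂ) ^ k * hermiteH n x * fourierWeight ξ x := by
  have := continuous_hermiteH n
  have := continuous_fourierWeight ξ
  refine (integrable_pow_mul_hermiteH n k).mono (by fun_prop)
    (Filter.Eventually.of_forall fun x => le_of_eq ?_)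
  simp [norm_fourierWeight]

theorem integrable_hermiteH_mul_fourierWeight (ξ : ℝ) (n : ℕ) :
    Integrable fun x : ℝ => (hermiteH n x : ℂ) * fourierWeight ξ x := by
  simpa using integrable_pow_mul_hermiteH_mul_fourierWeight ξ n 0

/-- Integration by parts: `x e^{-x²/2} = -(e^{-x²/2})'` trades the factor `x` for a derivative of
the rest of the integrand. -/
theorem integral_mul_hermiteH_mul_fourierWeight (ξ : ℝ) (n : ℕ) :
    ∫ x : ℝ, (x : ℂ) * hermiteH n x * fourierWeight ξ x =
      2 * n * (∫ x : ℝ, (hermiteH (n - 1) x : ℂ) * fourierWeight ξ x)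
        - Complex.I * ξ * ∫ x : ℝ, (hermiteH n x : ℂ) * fourierWeight ξ x := by
  have i1 : Integrable fun x : ℝ => (x : ℂ) * hermiteH n x * fourierWeight ξ x := by
    simpa using integrable_pow_mul_hermiteH_mul_fourierWeight ξ n 1
  have i2 := (integrable_hermiteH_mul_fourierWeight ξ (n - 1)).const_mul (2 * n : ℂ)
  have i3 := (integrable_hermiteH_mul_fourierWeight ξ n).const_mul (Complex.I * ξ)
  have i23 : Integrable fun x : ℝ =>
      (2 * n : ℂ) * ((hermiteH (n - 1) x : ℂ) * fourierWeight ξ x)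
        - Complex.I * ξ * ((hermiteH n x : ℂ) * fourierWeight ξ x) := i2.sub i3
  have hd (x : ℝ) : HasDerivAt (fun x : ℝ => (hermiteH n x : ℂ) * fourierWeight ξ x)
      ((2 * n : ℂ) * ((hermiteH (n - 1) x : ℂ) * fourierWeight ξ x)
        - Complex.I * ξ * ((hermiteH n x : ℂ) * fourierWeight ξ x)
        - (x : ℂ) * hermiteH n x * fourierWeight ξ x) x := by
    convert! (hasDerivAt_hermiteH n x).ofReal_comp.mul (hasDerivAt_fourierWeight ξ x) using 1
    push_cast
    ring
  have h := integral_eq_zero_of_hasDerivAt_of_integrable hd (i23.sub i1)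
    (integrable_hermiteH_mul_fourierWeight ξ n)
  rw [integral_sub i23 i1, integral_sub i2 i3, integral_const_mul,
    integral_const_mul] at h
  linear_combination -h

theorem integral_hermiteH_succ_mul_fourierWeight (ξ : ℝ) (n : ℕ) :
    ∫ x : ℝ, (hermiteH (n + 1) x : ℂ) * fourierWeight ξ x =
      2 * n * (∫ x : ℝ, (hermiteH (n - 1) x : ℂ) * fourierWeight ξ x)
        - 2 * Complex.I * ξ * ∫ x : ℝ, (hermiteH n x : ℂ) * fourierWeight ξ x := by
  have i1 : Integrable fun x : ℝ => (2 : ℂ) * ((x : ℂ) * hermiteH n x * fourierWeight ξ x) := by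
    simpa using (integrable_pow_mul_hermiteH_mul_fourierWeight ξ n 1).const_mul 2
  have i2 := (integrable_hermiteH_mul_fourierWeight ξ (n - 1)).const_mul (2 * n : ℂ)
  have h : ∀ x : ℝ, (hermiteH (n + 1) x : ℂ) * fourierWeight ξ x =
      2 * ((x : ℂ) * hermiteH n x * fourierWeight ξ x)
        - (2 * n : ℂ) * ((hermiteH (n - 1) x : ℂ) * fourierWeight ξ x) := by
    intro x
    rw [hermiteH_succ]
    push_cast
    ring
  simp_rw [h]
  rw [integral_sub i1 i2, integral_const_mul, integral_const_mul,
    integral_mul_hermiteH_mul_fourierWeight]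
  ring

theorem integral_fourierWeight (ξ : ℝ) :
    ∫ x : ℝ, fourierWeight ξ x = Real.sqrt (2 * Real.pi) * (Real.exp (-ξ ^ 2 / 2) : ℝ) := by
  have h := fourierIntegral_gaussian (b := 1 / 2) (by norm_num) (-ξ : ℂ)
  have hs : ((Real.pi : ℂ) / (1 / 2)) ^ (1 / 2 : ℂ) = (Real.sqrt (2 * Real.pi) : ℝ) := by
    rw [Real.sqrt_eq_rpow, Complex.ofReal_cpow (by positivity)]
    push_cast
    congr 1
    ring
  rw [hs] at h
  convert h using 1
  · congr 1
    ext x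
    simp only [fourierWeight]
    rw [mul_comm]
    push_cast
    ring_nf
  · push_cast
    ring_nf

theorem integral_hermiteH_mul_fourierWeight (ξ : ℝ) (n : ℕ) :
    ∫ x : ℝ, (hermiteH n x : ℂ) * fourierWeight ξ x =
      Real.sqrt (2 * Real.pi) * ((-Complex.I) ^ n * (Real.exp (-ξ ^ 2 / 2) * hermiteH n ξ : ℝ)) := by
  induction n using Nat.strong_induction_on with
  | _ n ih =>
    match n with
    | 0 => simpa [hermiteH] using integral_fourierWeight ξ
    | n + 1 =>
      rw [integral_hermiteH_succ_mul_fourierWeight, ih n (by omega), hermiteH_succ]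
      match n with
      | 0 =>
        push_cast
        ring
      | n + 1 =>
        rw [ih (n + 1 - 1) (by omega), Nat.add_sub_cancel]
        push_cast
        linear_combination (2 * (n + 1) * Real.sqrt (2 * Real.pi) * (-Complex.I) ^ n *
          Complex.exp (-ξ ^ 2 / 2) * hermiteH n ξ) * Complex.I_sq

theorem FT_normHermite_eigen (n : ℕ) (ξ : ℝ) :
    FT (fun x => (normHermite n x : ℂ)) ξ = (-Complex.I) ^ n * ↑(normHermite n ξ) := by
  have h : ∀ x : ℝ, (normHermite n x : ℂ) * Complex.exp (-Complex.I * x * ξ) =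
      ((Real.sqrt (2 ^ n * n.factorial) : ℝ) : ℂ)⁻¹ *
        ((hermiteH n x : ℂ) * fourierWeight ξ x) := by
    intro x
    simp only [normHermite, fourierWeight]
    push_cast
    ring
  have hpi : ((Real.sqrt (2 * Real.pi) : ℝ) : ℂ) ≠ 0 :=
    Complex.ofReal_ne_zero.2 (by positivity)
  simp only [FT]
  simp_rw [h]
  rw [integral_const_mul, integral_hermiteH_mul_fourierWeight]
  simp only [normHermite, Complex.ofReal_div, Complex.ofReal_inv]
  field_simp
end
end
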